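/- arXiv:1610.00179 — 3 statements merged into one kernel-verified Lean document; each statement's English description precedes it below -/
import Mathlib

section
/- Let G_τ be a bidirected graph and Rt(G_τ) any transitive reduction of G_τ. Then Ft(Rt(G_τ)) = Ft(G_τ). -/
/-- A signed vertex `x^α` : a vertex together with a sign in `ℤˣ`. -/
abbrev SV (V : Type) := V × ℤˣ

/-- A dart : an ordered signed edge `(x^α, y^β)`, traversed from `x` (entered with
half-edge sign `α`) to `y` (left with half-edge sign `β`). -/
abbrev BDart (V : Type) := SV V × SV V

/-- A bidirected graph on the vertex set `V`, given as its set of (unordered) signed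
edges `{x^α, y^β}`; the half-edge of such an edge at `x` has sign `α` and the
half-edge at `y` has sign `β`. -/
abbrev BGraph (V : Type) := Set (Sym2 (SV V))

/-- `IsWalk G x l y` : the list of darts `l` forms a chain from `x` to `y` in `G`. -/
def IsWalk {V : Type} (G : BGraph V) : V → List (BDart V) → V → Prop
  | x, [], y => x = y
  | x, d :: l, y => d.1.1 = x ∧ Sym2.mk d.1 d.2 ∈ G ∧ IsWalk G d.2.1 l y

/-- `IsBWalk G x α l y β` : `l` is a b-walk from `x^α` to `y^β` : a nonempty chain
from `x` to `y` whose first half-edge sign at `x` is `α`, whose last half-edge sign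
at `y` is `β`, and such that at every internal vertex occurrence the two incident
half-edge signs sum to `0`. -/
def IsBWalk {V : Type} (G : BGraph V) (x : V) (α : ℤˣ) (l : List (BDart V)) (y : V)
    (β : ℤˣ) : Prop :=
  l ≠ [] ∧ IsWalk G x l y ∧ (∀ d ∈ l.head?, d.1.2 = α) ∧ (∀ d ∈ l.getLast?, d.2.2 = β) ∧
    List.Chain' (fun d d' => ((d.2.2 : ℤ) + (d'.1.2 : ℤ) = 0)) l

/-- `IsBPath G x α l y β` : `l` is a b-path from `x^α` to `y^β` : a b-walk from `x^α`
to `y^β` that is minimal, i.e. no proper subsequence of its darts, taken in the same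
order, is a b-walk from `x^α` to `y^β`. -/
def IsBPath {V : Type} (G : BGraph V) (x : V) (α : ℤˣ) (l : List (BDart V)) (y : V)
    (β : ℤˣ) : Prop :=
  IsBWalk G x α l y β ∧ ∀ l', l'.Sublist l → l' ≠ l → ¬ IsBWalk G x α l' y β

/-- The transitive closure `Ft G` : its edges are the edges `{x^α, y^β}` for which
`G` contains a b-path from `x^α` to `y^β`. -/
def Ft {V : Type} (G : BGraph V) : BGraph V :=
  {e | ∃ x α y β l, IsBPath G x α l y β ∧ e = Sym2.mk (x, α) (y, β)}

/-- The transitive closure `ft G H` of the partial graph `H` within `G` : the edges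
of `H` together with every edge `{x^α, y^β}` of `G` for which `H` contains a b-path
from `x^α` to `y^β`. -/
def ft {V : Type} (G H : BGraph V) : BGraph V :=
  H ∪ {e | e ∈ G ∧ ∃ x α y β l, IsBPath H x α l y β ∧ e = Sym2.mk (x, α) (y, β)}

/-- `IsTR G H` : `H` is a transitive reduction of `G` : a partial graph of `G`
minimal with the property `ft G H = G`. -/
def IsTR {V : Type} (G H : BGraph V) : Prop :=
  H ⊆ G ∧ ft G H = G ∧ ∀ H', H' ⊂ H → ft G H' ≠ G

/-! Passing from the half-edge by which a walk leaves a vertex to the one by which it leaves the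
next vertex is a relation `BStep G` on signed vertices. Under it b-walks become chains of
composable steps, and shortening a b-walk to a minimal one does not change its ends, so `Ft` is
literally the transitive closure of this relation. It is therefore monotone, extensive and
idempotent, and `H ⊆ ft G H ⊆ Ft H` gives `Ft (ft G H) = Ft H`. -/

section

variable {V : Type} {G H : BGraph V}

/-- The signed vertex `x^(-α)` opposite to `x^α`: a b-walk that arrives at a vertex through one of
them must leave through the other. -/
def negSign (a : SV V) : SV V := (a.1, -a.2)

@[simp]
theorem negSign_negSign (a : SV V) : negSign (negSign a) = a := by
  simp [negSign]

/-- The step relation of a bidirected graph. Both ends of a step are signed vertices that a b-walk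
leaves through: it departs by the half-edge `a` and, having arrived by the half-edge `negSign b`,
may depart next by `b`. The sign of `b` is reversed so that consecutive steps compose. -/
def BStep (G : BGraph V) (a b : SV V) : Prop := s(a, negSign b) ∈ G

theorem BStep.reverse {a b : SV V} (h : BStep G a b) : BStep G (negSign b) (negSign a) := by
  simpa [BStep, Sym2.eq_swap] using h

theorem transGen_bStep_reverse {a b : SV V} (h : Relation.TransGen (BStep G) a b) :
    Relation.TransGen (BStep G) (negSign b) (negSign a) :=
  h.swap.lift negSign fun _ _ hstep => BStep.reverse hstep

theorem bStep_le_bStep : BStep G ≤ BStep H ↔ G ⊆ H := by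
  refine ⟨fun hle e => ?_, fun hGH a b hab => hGH hab⟩
  induction e with
  | _ a b => simpa [BStep] using hle a (negSign b)

theorem units_coe_add_coe_eq_zero (u v : ℤˣ) : (u : ℤ) + v = 0 ↔ v = -u := by
  rw [Units.ext_iff, Units.val_neg, eq_neg_iff_add_eq_zero, add_comm]

theorem isBWalk_singleton {a b : SV V} {d : BDart V} :
    IsBWalk G a.1 a.2 [d] b.1 b.2 ↔ d = (a, b) ∧ s(a, b) ∈ G := by
  constructor
  · rintro ⟨-, ⟨hstart, hd, hend⟩, hhead, hlast, -⟩
    obtain rfl : d.1 = a := Prod.ext hstart (hhead d rfl)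
    obtain rfl : d.2 = b := Prod.ext hend (hlast d rfl)
    exact ⟨rfl, hd⟩
  · rintro ⟨rfl, hab⟩
    exact ⟨List.cons_ne_nil _ _, ⟨rfl, hab, rfl⟩, by simp, by simp, List.isChain_singleton _⟩

theorem isBWalk_cons_cons {a b : SV V} {d e : BDart V} {l : List (BDart V)} :
    IsBWalk G a.1 a.2 (d :: e :: l) b.1 b.2 ↔
      d.1 = a ∧ s(d.1, d.2) ∈ G ∧
        IsBWalk G (negSign d.2).1 (negSign d.2).2 (e :: l) b.1 b.2 := by
  constructor
  · rintro ⟨-, ⟨hstart, hd, htail⟩, hhead, hlast, hchain⟩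
    obtain ⟨hsign, hchain⟩ := List.isChain_cons_cons.1 hchain
    have hhead' : ∀ d' ∈ (e :: l).head?, d'.1.2 = -d.2.2 := by
      simpa using (units_coe_add_coe_eq_zero _ _).1 hsign
    exact ⟨Prod.ext hstart (hhead d rfl), hd, List.cons_ne_nil _ _, htail, hhead', hlast, hchain⟩
  · rintro ⟨rfl, hd, -, htail, hhead, hlast, hchain⟩
    have hsign : (d.2.2 : ℤ) + e.1.2 = 0 := (units_coe_add_coe_eq_zero _ _).2 (hhead e rfl)
    exact ⟨List.cons_ne_nil _ _, ⟨rfl, hd, htail⟩, by simp, hlast,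
      List.isChain_cons_cons.2 ⟨hsign, hchain⟩⟩

theorem IsBWalk.transGen_bStep {a b : SV V} {l : List (BDart V)}
    (h : IsBWalk G a.1 a.2 l b.1 b.2) : Relation.TransGen (BStep G) a (negSign b) := by
  induction l generalizing a with
  | nil => exact absurd rfl h.1
  | cons d l ih =>
    cases l with
    | nil => exact .single (by simpa [BStep] using (isBWalk_singleton.1 h).2)
    | cons e l =>
      obtain ⟨rfl, hd, htail⟩ := isBWalk_cons_cons.1 h
      exact .head (by simpa [BStep] using hd) (ih htail)

theorem exists_isBWalk_iff_transGen {a b : SV V} :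
    (∃ l, IsBWalk G a.1 a.2 l b.1 b.2) ↔ Relation.TransGen (BStep G) a (negSign b) := by
  refine ⟨fun ⟨_, hl⟩ => hl.transGen_bStep, fun h => ?_⟩
  induction h using Relation.TransGen.head_induction_on with
  | single hstep => exact ⟨[(_, b)], isBWalk_singleton.2 ⟨rfl, by simpa [BStep] using hstep⟩⟩
  | @head a c hstep _ ih =>
    obtain ⟨l, hl⟩ := ih
    obtain ⟨e, l, rfl⟩ := List.exists_cons_of_ne_nil hl.1
    exact ⟨(a, negSign c) :: e :: l, isBWalk_cons_cons.2 ⟨rfl, hstep, by simpa using hl⟩⟩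

theorem exists_isBPath_iff_exists_isBWalk {x y : V} {α β : ℤˣ} :
    (∃ l, IsBPath G x α l y β) ↔ ∃ l, IsBWalk G x α l y β := by
  refine ⟨fun ⟨l, hl⟩ => ⟨l, hl.1⟩, fun hwalk => ?_⟩
  obtain ⟨l, hl, hshortest⟩ :=
    (measure List.length).wf.has_min {l | IsBWalk G x α l y β} hwalk
  exact ⟨l, hl, fun l' hsub hne hl' =>
    hne (hsub.eq_of_length_le (not_lt.1 (hshortest l' hl')))⟩

theorem exists_isBPath_iff_transGen {a b : SV V} :
    (∃ l, IsBPath G a.1 a.2 l b.1 b.2) ↔ Relation.TransGen (BStep G) a (negSign b) :=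
  exists_isBPath_iff_exists_isBWalk.trans exists_isBWalk_iff_transGen

theorem bStep_Ft : BStep (Ft G) = Relation.TransGen (BStep G) := by
  ext a b
  constructor
  · rintro ⟨x, α, y, β, l, hl, heq⟩
    have hpath : Relation.TransGen (BStep G) (x, α) (negSign (y, β)) :=
      exists_isBPath_iff_transGen.1 ⟨l, hl⟩
    rcases Sym2.eq_iff.1 heq with ⟨rfl, hb⟩ | ⟨rfl, hb⟩
    · simpa [← hb] using hpath
    · simpa [← hb] using transGen_bStep_reverse hpath
  · intro h
    obtain ⟨l, hl⟩ := exists_isBPath_iff_transGen.2 ((negSign_negSign b).symm ▸ h)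
    exact ⟨_, _, _, _, l, hl, rfl⟩

theorem subset_Ft (G : BGraph V) : G ⊆ Ft G :=
  bStep_le_bStep.1 <| bStep_Ft ▸ fun _ _ => .single

theorem Ft_mono (hGH : G ⊆ H) : Ft G ⊆ Ft H := by
  rw [← bStep_le_bStep, bStep_Ft, bStep_Ft]
  exact Relation.TransGen.mono (bStep_le_bStep.2 hGH)

theorem Ft_Ft (G : BGraph V) : Ft (Ft G) = Ft G := by
  refine Set.Subset.antisymm (bStep_le_bStep.1 ?_) (subset_Ft _)
  rw [bStep_Ft, bStep_Ft, Relation.transGen_eq_self]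

theorem subset_ft (G H : BGraph V) : H ⊆ ft G H :=
  Set.subset_union_left

theorem ft_subset_Ft (G H : BGraph V) : ft G H ⊆ Ft H :=
  Set.union_subset (subset_Ft H) fun _ he => he.2

theorem stmt11_general (G H : BGraph V) : Ft H = Ft (ft G H) :=
  Set.Subset.antisymm (Ft_mono (subset_ft G H)) <|
    calc Ft (ft G H) ⊆ Ft (Ft H) := Ft_mono (ft_subset_Ft G H)
      _ = Ft H := Ft_Ft H

end

/-- For any transitive reduction `H` of `G`, `Ft H = Ft G`. -/
theorem stmt11 {V : Type} [Fintype V] (G H : BGraph V) (h : IsTR G H) :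
    Ft H = Ft G :=
  (stmt11_general G H).trans (congrArg Ft h.2.1)
end

section
/- Let G_τ be a bidirected graph with no positive loops. If G_τ contains no b-path of length greater than 1, then G_τ is its own unique transitive reduction (Rt(G_τ) = G_τ) and every vertex of G_τ is a source or a sink. -/
/-!
A b-path of a partial graph `H` is a b-path of `G`, because minimality only concerns the darts
already used. So if the b-paths of `G` are single edges, then so are those of `H`, and closing `H`
transitively adds nothing. Every partial graph is thus its own closure, and only `G` has closure
`G`.

If two edges `{p, x^α}` and `{x^(-α), q}` meet at `x`, then together they form a b-walk from `p` to
`q`. It could be shortened only if one of the two edges alone led from `p` to `q`, which would make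
the other one a positive loop at `x`.
-/

section

variable {V : Type} {G H : BGraph V}

theorem IsWalk.edge_mem : ∀ {x y : V} {l : List (BDart V)}, IsWalk G x l y →
    ∀ d ∈ l, s(d.1, d.2) ∈ G
  | _, _, [], _ => List.forall_mem_nil _
  | _, _, _ :: _, ⟨_, hd, hl⟩ => List.forall_mem_cons.2 ⟨hd, hl.edge_mem⟩

theorem IsWalk.transfer : ∀ {x y : V} {l : List (BDart V)}, IsWalk G x l y →
    (∀ d ∈ l, s(d.1, d.2) ∈ H) → IsWalk H x l y
  | _, _, [], h, _ => h
  | _, _, _ :: _, ⟨hx, _, hl⟩, hH =>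
    have ⟨hd, hH'⟩ := List.forall_mem_cons.1 hH
    ⟨hx, hd, hl.transfer hH'⟩

theorem IsBWalk.transfer {x y : V} {α β : ℤˣ} {l : List (BDart V)} (h : IsBWalk G x α l y β)
    (hH : ∀ d ∈ l, s(d.1, d.2) ∈ H) : IsBWalk H x α l y β :=
  ⟨h.1, h.2.1.transfer hH, h.2.2⟩

theorem IsBPath.mono (hHG : H ⊆ G) {x y : V} {α β : ℤˣ} {l : List (BDart V)}
    (h : IsBPath H x α l y β) : IsBPath G x α l y β := by
  obtain ⟨hwalk, hmin⟩ := h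
  have hH : ∀ d ∈ l, s(d.1, d.2) ∈ H := hwalk.2.1.edge_mem
  exact ⟨hwalk.transfer fun d hd ↦ hHG (hH d hd), fun l' hl' hne hwalk' ↦
    hmin l' hl' hne (hwalk'.transfer fun d hd ↦ hH d (hl'.subset hd))⟩

theorem isBWalk_singleton_s14 {x y : V} {α β : ℤˣ} {d : BDart V} :
    IsBWalk G x α [d] y β ↔ d = ((x, α), (y, β)) ∧ s((x, α), (y, β)) ∈ G := by
  obtain ⟨⟨a, s⟩, ⟨b, t⟩⟩ := d
  constructor
  · rintro ⟨-, ⟨rfl, hmem, rfl⟩, hα, hβ, -⟩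
    obtain rfl : s = α := hα _ rfl
    obtain rfl : t = β := hβ _ rfl
    exact ⟨rfl, hmem⟩
  · rintro ⟨⟨⟩, hmem⟩
    exact ⟨by simp, ⟨rfl, hmem, rfl⟩, by simp, by simp, List.isChain_singleton _⟩

theorem ft_eq_self (hH : ∀ x α l y β, IsBPath H x α l y β → l.length ≤ 1) : ft G H = H := by
  refine Set.union_eq_left.2 ?_
  rintro _ ⟨-, x, α, y, β, l, hl, rfl⟩
  have hlen : l.length = 1 :=
    le_antisymm (hH x α l y β hl) (List.length_pos_iff.2 hl.1.1)
  obtain ⟨d, rfl⟩ := List.length_eq_one_iff.1 hlen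
  exact (isBWalk_singleton_s14.1 hl.1).2

theorem isTR_iff_eq (hG : ∀ x α l y β, IsBPath G x α l y β → l.length ≤ 1) :
    IsTR G H ↔ H = G := by
  have hft : ∀ {K : BGraph V}, K ⊆ G → ft G K = K := fun hK ↦
    ft_eq_self fun x α l y β hl ↦ hG x α l y β (hl.mono hK)
  constructor
  · rintro ⟨hHG, hH, -⟩
    rwa [hft hHG] at hH
  · rintro rfl
    exact ⟨subset_rfl, hft subset_rfl, fun K hK ↦ (hft hK.subset).trans_ne hK.ne⟩

theorem isBPath_pair {x : V} {α : ℤˣ} (hloop : s((x, α), (x, -α)) ∉ G) {p q : SV V}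
    (hp : s(p, (x, α)) ∈ G) (hq : s((x, -α), q) ∈ G) :
    IsBPath G p.1 p.2 [(p, (x, α)), ((x, -α), q)] q.1 q.2 := by
  refine ⟨⟨by simp, ⟨rfl, hp, rfl, hq, rfl⟩, by simp, by simp, List.isChain_pair.2 (by simp)⟩,
    fun l hl hne hwalk ↦ ?_⟩
  have hlen : l.length = 1 := by
    have hpos : 0 < l.length := List.length_pos_iff.2 hwalk.1
    have hlt : l.length < 2 := lt_of_le_of_ne hl.length_le fun h ↦ hne (hl.eq_of_length h)
    omega
  obtain ⟨d, rfl⟩ := List.length_eq_one_iff.1 hlen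
  obtain ⟨rfl, -⟩ := isBWalk_singleton_s14.1 hwalk
  rw [Sym2.eq_swap] at hloop
  have hmem : (p, q) = (p, (x, α)) ∨ (p, q) = ((x, -α), q) := by
    simpa only [List.singleton_sublist, List.mem_pair] using hl
  rcases hmem with h | h
  · obtain rfl : q = (x, α) := congrArg Prod.snd h
    exact hloop hq
  · obtain rfl : p = (x, -α) := congrArg Prod.fst h
    exact hloop hp

/-- `G` has a positive loop at `x`: the two half-edges of a loop of sign `+1` have opposite
signs at `x`. -/
def HasPositiveLoopAt (G : BGraph V) (x : V) : Prop :=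
  s((x, 1), (x, -1)) ∈ G

/-- The vertex `x` is a source: every half-edge at `x` has sign `+1`. An isolated vertex is both
a source and a sink. -/
def IsSource (G : BGraph V) (x : V) : Prop :=
  ∀ (α : ℤˣ) (e : Sym2 (SV V)), e ∈ G → (x, α) ∈ e → α = 1

/-- The vertex `x` is a sink: every half-edge at `x` has sign `-1`. -/
def IsSink (G : BGraph V) (x : V) : Prop :=
  ∀ (α : ℤˣ) (e : Sym2 (SV V)), e ∈ G → (x, α) ∈ e → α = -1

theorem isSource_or_isSink (hG : ∀ x α l y β, IsBPath G x α l y β → l.length ≤ 1) {x : V}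
    (hx : ¬ HasPositiveLoopAt G x) : IsSource G x ∨ IsSink G x := by
  by_contra hcon
  simp only [IsSource, IsSink, not_or, not_forall] at hcon
  obtain ⟨⟨α, e, he, hxe, hα⟩, β, f, hf, hxf, hβ⟩ := hcon
  obtain rfl : α = -1 := (Int.units_eq_one_or α).resolve_left hα
  obtain rfl : β = 1 := (Int.units_eq_one_or β).resolve_right hβ
  obtain ⟨q, rfl⟩ := hxe
  obtain ⟨p, rfl⟩ := hxf
  have hlen := hG _ _ _ _ _ (isBPath_pair hx (Sym2.eq_swap ▸ hf) he)
  exact absurd hlen (by simp)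

end

theorem stmt14_general {V : Type} (G : BGraph V)
    (hpath : ∀ x α l y β, IsBPath G x α l y β → l.length ≤ 1) :
    (∀ H, IsTR G H ↔ H = G) ∧
      ∀ x : V, ¬ HasPositiveLoopAt G x → IsSource G x ∨ IsSink G x :=
  ⟨fun _ ↦ isTR_iff_eq hpath, fun _ ↦ isSource_or_isSink hpath⟩

/-- Let `G` be a bidirected graph with no positive loops. If `G`
contains no b-path of length greater than `1`, then `G` is its own unique transitive
reduction, and every vertex of `G` is a source or a sink. -/
theorem stmt14 {V : Type} [Fintype V] (G : BGraph V)
    (hloop : ∀ (x : V) (α β : ℤˣ), Sym2.mk (x, α) (x, β) ∈ G → -(α * β) ≠ 1)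
    (hpath : ∀ x α l y β, IsBPath G x α l y β → l.length ≤ 1) :
    (IsTR G G ∧ ∀ H, IsTR G H → H = G) ∧
      ∀ x : V,
        (∀ (α : ℤˣ) (e : Sym2 (SV V)), e ∈ G → (x, α) ∈ e → α = 1) ∨
        (∀ (α : ℤˣ) (e : Sym2 (SV V)), e ∈ G → (x, α) ∈ e → α = -1) :=
  have ⟨hTR, hsign⟩ := stmt14_general G hpath
  ⟨⟨(hTR G).2 rfl, fun H ↦ (hTR H).1⟩, fun x ↦ hsign x fun h ↦ hloop x 1 (-1) h (by decide)⟩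
end

section
/- Let G_τ be a bidirected graph and Rt(G_τ) any transitive reduction of G_τ. Then (i) Rt(G_τ) is balanced if, and only if, G_τ is balanced, and (ii) Rt(G_τ) is all positive if, and only if, G_τ is all positive. -/
/-- The sign of the edge underlying a dart `(x^α, y^β)` : `σ(e) = -αβ`. -/
def dartSign {V : Type} (d : BDart V) : ℤˣ := -(d.1.2 * d.2.2)

/-- A cycle at `x` in a bidirected graph : a nonempty closed chain with pairwise
distinct edges and pairwise distinct vertices. -/
def IsCycle {V : Type} (G : BGraph V) (x : V) (l : List (BDart V)) : Prop :=
  l ≠ [] ∧ IsWalk G x l x ∧ (l.map fun d => Sym2.mk d.1 d.2).Nodup ∧ (l.map fun d => d.1.1).Nodup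

/-- A bidirected graph is balanced if every cycle is positive. -/
def IsBalanced {V : Type} (G : BGraph V) : Prop :=
  ∀ x l, IsCycle G x l → (l.map dartSign).prod = 1

/-- A bidirected graph is all positive if every edge has sign `+1`. -/
def IsAllPositive {V : Type} (G : BGraph V) : Prop :=
  ∀ d : BDart V, Sym2.mk d.1 d.2 ∈ G → dartSign d = 1

/-!
The sign of a b-walk telescopes: it depends only on its two end signs, and equals the sign of the
edge that this b-walk adds to the transitive closure. So closing a graph transitively creates no
new combination of the two ends and the sign of a walk. Both properties can be read off these
combinations: a graph is all positive iff all its walks are positive, and balanced iff all its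
closed walks are positive, because a closed walk that repeats a vertex or an edge decomposes into
shorter closed walks.
-/

theorem exists_eq_append_of_not_nodup_map {α β : Type*} {f : α → β} {l : List α}
    (h : ¬ (l.map f).Nodup) :
    ∃ l₁ a l₂ b l₃, l = l₁ ++ a :: (l₂ ++ b :: l₃) ∧ f a = f b := by
  rw [List.Nodup, List.pairwise_map, List.pairwise_iff_forall_sublist] at h
  push Not at h
  obtain ⟨a, b, hab, hf⟩ := h
  obtain ⟨r₁, r₂, rfl, ha, hb⟩ := List.cons_sublist_iff.1 hab
  obtain ⟨l₁, m, rfl⟩ := List.append_of_mem ha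
  obtain ⟨m', l₃, rfl⟩ := List.append_of_mem (List.singleton_sublist.1 hb)
  exact ⟨l₁, a, m ++ m', b, l₃, by simp only [List.append_assoc, List.cons_append], hf⟩

section

variable {V : Type} {G H : BGraph V} {x y z : V} {d e : BDart V} {l l₁ l₂ l₃ : List (BDart V)}

theorem dartSign_eq_of_edge_eq (h : Sym2.mk d.1 d.2 = Sym2.mk e.1 e.2) :
    dartSign d = dartSign e := by
  rcases Sym2.eq_iff.1 h with ⟨h₁, h₂⟩ | ⟨h₁, h₂⟩
  · rw [dartSign, dartSign, h₁, h₂]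
  · rw [dartSign, dartSign, h₁, h₂, mul_comm]

/-- The sign of a chain of darts: the product of the signs of its edges. -/
def walkSign (l : List (BDart V)) : ℤˣ := (l.map dartSign).prod

@[simp] theorem walkSign_nil : walkSign ([] : List (BDart V)) = 1 := rfl

@[simp] theorem walkSign_cons (d : BDart V) (l : List (BDart V)) :
    walkSign (d :: l) = dartSign d * walkSign l := by
  simp only [walkSign, List.map_cons, List.prod_cons]

@[simp] theorem walkSign_append (l₁ l₂ : List (BDart V)) :
    walkSign (l₁ ++ l₂) = walkSign l₁ * walkSign l₂ := by
  simp only [walkSign, List.map_append, List.prod_append]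

theorem isWalk_append :
    IsWalk G x (l₁ ++ l₂) y ↔ ∃ z, IsWalk G x l₁ z ∧ IsWalk G z l₂ y := by
  induction l₁ generalizing x with
  | nil => simp only [List.nil_append, IsWalk, exists_eq_left']
  | cons d l₁ ih => simp only [List.cons_append, IsWalk, ih, exists_and_left, and_assoc]

theorem IsWalk.split_at_vertex (h : IsWalk G x (l₁ ++ d :: (l₂ ++ e :: l₃)) y)
    (hde : d.1.1 = e.1.1) :
    IsWalk G d.1.1 (d :: l₂) d.1.1 ∧ IsWalk G x (l₁ ++ e :: l₃) y := by
  obtain ⟨_, h₁, rfl, hd, h⟩ := isWalk_append.1 h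
  obtain ⟨_, h₂, rfl, he, h₃⟩ := isWalk_append.1 h
  exact ⟨⟨rfl, hd, hde ▸ h₂⟩, isWalk_append.2 ⟨d.1.1, h₁, hde.symm, he, h₃⟩⟩

theorem IsWalk.split_at_reversed_edge (h : IsWalk G x (l₁ ++ d :: (l₂ ++ e :: l₃)) y)
    (hsource : d.1 = e.2) (htarget : d.2 = e.1) :
    IsWalk G d.2.1 l₂ d.2.1 ∧ IsWalk G x (l₁ ++ l₃) y := by
  obtain ⟨_, h₁, rfl, -, h⟩ := isWalk_append.1 h
  obtain ⟨_, h₂, rfl, -, h₃⟩ := isWalk_append.1 h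
  exact ⟨htarget ▸ h₂, isWalk_append.2 ⟨d.1.1, h₁, hsource ▸ h₃⟩⟩

theorem IsWalk.exists_split_of_not_nodup_vertices (h : IsWalk G x l y)
    (hl : ¬ (l.map fun d => d.1.1).Nodup) :
    ∃ z m n, IsWalk G z m z ∧ IsWalk G x n y ∧ m.length < l.length ∧ n.length < l.length ∧
      walkSign l = walkSign m * walkSign n := by
  obtain ⟨l₁, d, l₂, e, l₃, rfl, hde⟩ := exists_eq_append_of_not_nodup_map hl
  obtain ⟨hm, hn⟩ := h.split_at_vertex hde
  refine ⟨d.1.1, d :: l₂, l₁ ++ e :: l₃, hm, hn, by grind, by grind, ?_⟩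
  simp only [walkSign_append, walkSign_cons]
  ac_rfl

theorem IsWalk.exists_split_of_not_nodup_edges (h : IsWalk G x l y)
    (hl : ¬ (l.map fun d => Sym2.mk d.1 d.2).Nodup) :
    ∃ z m n, IsWalk G z m z ∧ IsWalk G x n y ∧ m.length < l.length ∧ n.length < l.length ∧
      walkSign l = walkSign m * walkSign n := by
  by_cases hv : (l.map fun d => d.1.1).Nodup
  swap
  · exact h.exists_split_of_not_nodup_vertices hv
  obtain ⟨l₁, d, l₂, e, l₃, rfl, hde⟩ := exists_eq_append_of_not_nodup_map hl
  rcases Sym2.eq_iff.1 hde with ⟨hsource, -⟩ | ⟨hsource, htarget⟩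
  · have hvertex : d.1.1 = e.1.1 := congrArg Prod.fst hsource
    grind
  obtain ⟨hm, hn⟩ := h.split_at_reversed_edge hsource htarget
  refine ⟨d.2.1, l₂, l₁ ++ l₃, hm, hn, by grind, by grind, ?_⟩
  calc walkSign (l₁ ++ d :: (l₂ ++ e :: l₃))
      = dartSign d * dartSign e * (walkSign l₂ * walkSign (l₁ ++ l₃)) := by
        simp only [walkSign_append, walkSign_cons]; ac_rfl
    _ = walkSign l₂ * walkSign (l₁ ++ l₃) := by
        rw [dartSign_eq_of_edge_eq hde, Int.units_mul_self, one_mul]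

theorem IsBalanced.walkSign_eq_one (hG : IsBalanced G) (h : IsWalk G x l x) :
    walkSign l = 1 := by
  induction hlen : l.length using Nat.strong_induction_on generalizing x l with
  | _ n ih =>
    subst hlen
    have eq_one_of_split : (∃ z m n, IsWalk G z m z ∧ IsWalk G x n x ∧ m.length < l.length ∧
        n.length < l.length ∧ walkSign l = walkSign m * walkSign n) → walkSign l = 1 := by
      rintro ⟨z, m, n, hm, hn, hml, hnl, hsign⟩
      rw [hsign, ih _ hml hm rfl, ih _ hnl hn rfl, one_mul]
    by_cases hnil : l = []
    · rw [hnil, walkSign_nil]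
    by_cases hedges : (l.map fun d => Sym2.mk d.1 d.2).Nodup
    swap
    · exact eq_one_of_split (h.exists_split_of_not_nodup_edges hedges)
    by_cases hvertices : (l.map fun d => d.1.1).Nodup
    swap
    · exact eq_one_of_split (h.exists_split_of_not_nodup_vertices hvertices)
    exact hG x l ⟨hnil, h, hedges, hvertices⟩

theorem IsBWalk.walkSign_eq {α β : ℤˣ} (h : IsBWalk G x α l y β) :
    walkSign l = -(α * β) := by
  induction l generalizing x α with
  | nil => exact (h.1 rfl).elim
  | cons d l ih =>
    obtain ⟨-, hwalk, hhead, hlast, hchain⟩ := h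
    obtain rfl : d.1.2 = α := hhead d rfl
    cases l with
    | nil =>
      obtain rfl : d.2.2 = β := hlast d rfl
      rw [walkSign_cons, walkSign_nil, mul_one, dartSign]
    | cons e l =>
      obtain ⟨hde, hchain⟩ := List.isChain_cons_cons.1 hchain
      have opposite : d.2.2 = -e.1.2 := Units.ext (eq_neg_of_add_eq_zero_left hde)
      have htail : walkSign (e :: l) = -(e.1.2 * β) :=
        ih ⟨List.cons_ne_nil e l, hwalk.2.2, fun _ he => by cases he; rfl,
          by rwa [List.getLast?_cons_cons] at hlast, hchain⟩
      calc walkSign (d :: e :: l)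
          = -(d.1.2 * -e.1.2) * -(e.1.2 * β) := by
            rw [walkSign_cons, htail, dartSign, opposite]
        _ = -(d.1.2 * (e.1.2 * e.1.2) * β) := by
            simp only [mul_neg, neg_neg, mul_assoc]
        _ = -(d.1.2 * β) := by rw [Int.units_mul_self, mul_one]

/-- `SignedReachable G x s y`: some walk of `G` from `x` to `y`, possibly of length zero, has
sign `s`. The half-edge signs at internal vertices are unconstrained. -/
def SignedReachable (G : BGraph V) (x : V) (s : ℤˣ) (y : V) : Prop :=
  ∃ l, IsWalk G x l y ∧ walkSign l = s

namespace SignedReachable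

variable {s t : ℤˣ}

theorem refl (G : BGraph V) (x : V) : SignedReachable G x 1 x :=
  ⟨[], rfl, rfl⟩

theorem of_edge (hd : Sym2.mk d.1 d.2 ∈ G) : SignedReachable G d.1.1 (dartSign d) d.2.1 :=
  ⟨[d], ⟨rfl, hd, rfl⟩, by rw [walkSign_cons, walkSign_nil, mul_one]⟩

theorem trans (hxy : SignedReachable G x s y) (hyz : SignedReachable G y t z) :
    SignedReachable G x (s * t) z := by
  obtain ⟨l, hl, rfl⟩ := hxy
  obtain ⟨m, hm, rfl⟩ := hyz
  exact ⟨l ++ m, isWalk_append.2 ⟨y, hl, hm⟩, walkSign_append l m⟩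

theorem lift (hGH : ∀ d : BDart V, Sym2.mk d.1 d.2 ∈ G →
      SignedReachable H d.1.1 (dartSign d) d.2.1)
    (h : SignedReachable G x s y) : SignedReachable H x s y := by
  obtain ⟨l, hl, rfl⟩ := h
  induction l generalizing x with
  | nil => obtain rfl : x = y := hl; exact refl H x
  | cons d l ih =>
    obtain ⟨rfl, hd, hl⟩ := hl
    rw [walkSign_cons]
    exact (hGH d hd).trans (ih hl)

theorem mono (hGH : G ⊆ H) (h : SignedReachable G x s y) : SignedReachable H x s y :=
  h.lift fun _ hd => of_edge (hGH hd)

theorem symm (h : SignedReachable G x s y) : SignedReachable G y s x := by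
  obtain ⟨l, hl, rfl⟩ := h
  induction l generalizing x with
  | nil => obtain rfl : x = y := hl; exact refl G x
  | cons d l ih =>
    obtain ⟨rfl, hd, hl⟩ := hl
    have hswap : Sym2.mk d.2 d.1 = Sym2.mk d.1 d.2 := Sym2.eq_swap
    have hback : SignedReachable G d.2.1 (dartSign (d.2, d.1)) d.1.1 :=
      of_edge (d := (d.2, d.1)) (hswap ▸ hd)
    rw [walkSign_cons, mul_comm, ← dartSign_eq_of_edge_eq (d := (d.2, d.1)) hswap]
    exact (ih hl).trans hback

theorem of_mem_ft (hd : Sym2.mk d.1 d.2 ∈ ft G H) :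
    SignedReachable H d.1.1 (dartSign d) d.2.1 := by
  rcases hd with hd | ⟨-, x, α, y, β, l, hpath, hedge⟩
  · exact of_edge hd
  have hbwalk : SignedReachable H x (dartSign ((x, α), (y, β))) y :=
    ⟨l, hpath.1.2.1, hpath.1.walkSign_eq⟩
  rw [dartSign_eq_of_edge_eq (e := ((x, α), (y, β))) hedge]
  rcases Sym2.eq_iff.1 hedge with ⟨hx, hy⟩ | ⟨hy, hx⟩
  · rwa [hx, hy]
  · rw [hx, hy]; exact hbwalk.symm

end SignedReachable

theorem signedReachable_ft (G H : BGraph V) (x : V) (s : ℤˣ) (y : V) :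
    SignedReachable (ft G H) x s y ↔ SignedReachable H x s y :=
  ⟨.lift fun _ => .of_mem_ft, .mono Set.subset_union_left⟩

theorem isBalanced_iff_signedReachable :
    IsBalanced G ↔ ∀ x s, SignedReachable G x s x → s = 1 where
  mp hG _ _ := fun ⟨_, hl, hsign⟩ => hsign ▸ hG.walkSign_eq_one hl
  mpr h x l hl := h x _ ⟨l, hl.2.1, rfl⟩

theorem IsAllPositive.walkSign_eq_one (hG : IsAllPositive G) (h : IsWalk G x l y) :
    walkSign l = 1 := by
  induction l generalizing x with
  | nil => rfl
  | cons d l ih => rw [walkSign_cons, hG d h.2.1, ih h.2.2, one_mul]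

theorem isAllPositive_iff_signedReachable :
    IsAllPositive G ↔ ∀ x s y, SignedReachable G x s y → s = 1 where
  mp hG _ _ _ := fun ⟨_, hl, hsign⟩ => hsign ▸ hG.walkSign_eq_one hl
  mpr h _ hd := h _ _ _ (.of_edge hd)

theorem stmt15_general (G H : BGraph V) :
    (IsBalanced H ↔ IsBalanced (ft G H)) ∧ (IsAllPositive H ↔ IsAllPositive (ft G H)) := by
  simp only [isBalanced_iff_signedReachable, isAllPositive_iff_signedReachable,
    signedReachable_ft, and_self]

end

/-- For any transitive reduction `H` of `G` : (i) `H` is balanced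
if, and only if, `G` is balanced; (ii) `H` is all positive if, and only if, `G` is
all positive. -/
theorem stmt15 {V : Type} [Fintype V] (G H : BGraph V) (h : IsTR G H) :
    (IsBalanced H ↔ IsBalanced G) ∧ (IsAllPositive H ↔ IsAllPositive G) := by
  simpa only [h.2.1] using stmt15_general G H
end
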